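/- Let L ≥ 1 and suppose R_max ≥ 1 and A_max ≥ 1. If a strategy profile π of a finite discounted stochastic game satisfies ‖f(π) − π‖∞ ≤ (1−γ)⁵/(32 A_max³ R_max³ L²), then π is a 1/L-approximate Markov perfect equilibrium. -/

import Mathlib

/-!
Write `u = 1 - γ` and, for a fixed agent and state, let `adv b` be the advantage of action `b`: the
gain from playing `b` once and returning to `π` afterwards.  Everything rests on the comparison
principle `le_of_bellman_le`: if `x ≤ γ M x + c` with `M` stochastic, then `x ≤ c / u`.

* The gain `D` of the permanent deviation vanishes when `adv b ≤ 0` and satisfies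
  `adv b ≤ D b ≤ adv b / u` when `adv b ≥ 0` (`D_eq_zero`, `adv_le_D`, `D_le_adv_div`).
* Approximate fixedness of `f` says that `D b` is nearly `π b * ∑ D`.  Hence actions of nonpositive
  advantage carry little mass, while the others carry mass nearly proportional to `D`.  Since
  `∑ π b * adv b = 0`, the sum `∑ D` must be small: at most `u / (2 L)` (`sum_gain_le`).
* All advantages are then at most `u / (2 L)`, and the comparison principle, applied to the value
  difference between an arbitrary strategy and `π`, bounds any improvement by `1 / (2 L)`.
-/

open Finset

/-- A finite discounted stochastic game with `n` agents, `S` states and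
action counts `A i` for each agent `i`. -/
structure SG (n S : ℕ) (A : Fin n → ℕ) where
  P : Fin S → (∀ i, Fin (A i)) → Fin S → ℝ
  r : Fin n → Fin S → (∀ i, Fin (A i)) → ℝ
  Rmax : ℝ
  γ : ℝ
  P_nonneg : ∀ s a s', 0 ≤ P s a s'
  P_sum_one : ∀ s a, ∑ s', P s a s' = 1
  r_nonneg : ∀ i s a, 0 ≤ r i s a
  r_le_Rmax : ∀ i s a, r i s a ≤ Rmax
  γ_nonneg : 0 ≤ γ
  γ_lt_one : γ < 1

namespace SG

variable {n S : ℕ} {A : Fin n → ℕ}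

/-- A (behavioral) strategy profile: agent `i` plays at state `s` the distribution
`π i s` on its actions. -/
abbrev Profile (n S : ℕ) (A : Fin n → ℕ) := ∀ i : Fin n, Fin S → Fin (A i) → ℝ

/-- `π` is a genuine strategy profile: each `π i s` is a probability distribution. -/
def IsProfile (π : Profile n S A) : Prop :=
  (∀ i s a, 0 ≤ π i s a) ∧ ∀ i s, ∑ a, π i s a = 1

/-- `A_max`, the largest number of actions of any agent. -/
def Amax (A : Fin n → ℕ) : ℕ := Finset.univ.sup A

/-- Probability of the joint action `a` at state `s` under profile `π`. -/
def jointProb (π : Profile n S A) (s : Fin S) (a : ∀ i, Fin (A i)) : ℝ :=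
  ∏ i, π i s (a i)

/-- The state-transition matrix `P^π` induced by the profile `π`. -/
noncomputable def Pmat (g : SG n S A) (π : Profile n S A) : Matrix (Fin S) (Fin S) ℝ :=
  fun s s' => ∑ a, jointProb π s a * g.P s a s'

/-- Expected one-step reward `r^{i,π}(s)` of agent `i` at state `s` under `π`. -/
noncomputable def rvec (g : SG n S A) (π : Profile n S A) (i : Fin n) (s : Fin S) : ℝ :=
  ∑ a, jointProb π s a * g.r i s a

/-- The value function `V^{π^i,π^{-i}}` of agent `i` under profile `π`: the unique
solution of the Bellman equation `V = r^{i,π} + γ P^π V`, i.e. `(I − γP^π)⁻¹ r^{i,π}`. -/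
noncomputable def V (g : SG n S A) (π : Profile n S A) (i : Fin n) : Fin S → ℝ :=
  Matrix.mulVec (1 - g.γ • g.Pmat π)⁻¹ (g.rvec π i)

/-- The profile obtained from `π` by letting agent `i` play the pure action `a`
at state `s` (and `π i` at every other state). -/
def devProfile (π : Profile n S A) (i : Fin n) (s : Fin S) (a : Fin (A i)) : Profile n S A :=
  Function.update π i (fun t b => if t = s then (if b = a then (1 : ℝ) else 0) else π i t b)

/-- The one-step-deviation value `V^{π^i,π^{-i}}_{π^i(s,a)=1}(s)`. -/
noncomputable def Vdev (g : SG n S A) (π : Profile n S A) (i : Fin n) (s : Fin S)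
    (a : Fin (A i)) : ℝ :=
  g.V (devProfile π i s a) i s

/-- `D^{π}_{a}(s) = max(0, V^{π^i,π^{-i}}_{π^i(s,a)=1}(s) − V^{π^i,π^{-i}}(s))`. -/
noncomputable def D (g : SG n S A) (π : Profile n S A) (i : Fin n) (s : Fin S)
    (a : Fin (A i)) : ℝ :=
  max 0 (g.Vdev π i s a - g.V π i s)

/-- Nash's improvement map `f` on strategy profiles. -/
noncomputable def f (g : SG n S A) (π : Profile n S A) : Profile n S A :=
  fun i s a => (π i s a + g.D π i s a) / (1 + ∑ b, g.D π i s b)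

/-- `π` is a Markov perfect equilibrium: no agent can improve its value at any state
by unilaterally switching to another behavioral strategy. -/
def IsMPE (g : SG n S A) (π : Profile n S A) : Prop :=
  ∀ (s : Fin S) (i : Fin n) (σ : Fin S → Fin (A i) → ℝ),
    ((∀ t b, 0 ≤ σ t b) ∧ ∀ t, ∑ b, σ t b = 1) →
    g.V (Function.update π i σ) i s ≤ g.V π i s

/-- `π` is an `ε`-approximate Markov perfect equilibrium. -/
def IsApproxMPE (g : SG n S A) (π : Profile n S A) (ε : ℝ) : Prop :=
  ∀ (s : Fin S) (i : Fin n) (σ : Fin S → Fin (A i) → ℝ),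
    ((∀ t b, 0 ≤ σ t b) ∧ ∀ t, ∑ b, σ t b = 1) →
    g.V (Function.update π i σ) i s - ε ≤ g.V π i s

end SG

namespace SG

variable {n S : ℕ} {A : Fin n → ℕ}

/-! ### Comparison principle and the Bellman equation -/

/-- Comparison principle: look at a state maximizing `x`. -/
lemma le_of_bellman_le {ι : Type*} [Fintype ι] {M : ι → ι → ℝ} {γ c : ℝ} {x : ι → ℝ}
    (hM : ∀ s t, 0 ≤ M s t) (hM1 : ∀ s, ∑ t, M s t = 1) (h0 : 0 ≤ γ) (h1 : γ < 1)
    (hx : ∀ s, x s ≤ γ * ∑ t, M s t * x t + c) (s : ι) : x s ≤ c / (1 - γ) := by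
  have : Nonempty ι := ⟨s⟩
  obtain ⟨m, hm⟩ := Finite.exists_max x
  have h : ∑ t, M m t * x t ≤ x m := by
    calc ∑ t, M m t * x t ≤ ∑ t, M m t * x m :=
          Finset.sum_le_sum fun t _ => mul_le_mul_of_nonneg_left (hm t) (hM m t)
      _ = x m := by rw [← Finset.sum_mul, hM1, one_mul]
  refine (hm s).trans ?_
  rw [le_div_iff₀ (by linarith)]
  nlinarith [hx m, mul_le_mul_of_nonneg_left h h0]

lemma jointProb_nonneg {π : Profile n S A} (hπ : IsProfile π) (s : Fin S) (a : ∀ i, Fin (A i)) :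
    0 ≤ jointProb π s a :=
  Finset.prod_nonneg fun i _ => hπ.1 i s (a i)

lemma jointProb_sum {π : Profile n S A} (hπ : IsProfile π) (s : Fin S) :
    ∑ a, jointProb π s a = 1 := by
  unfold jointProb
  rw [← Fintype.prod_sum (fun i b => π i s b)]
  exact Finset.prod_eq_one fun i _ => hπ.2 i s

lemma Pmat_nonneg (g : SG n S A) {π : Profile n S A} (hπ : IsProfile π) (s t : Fin S) :
    0 ≤ g.Pmat π s t :=
  Finset.sum_nonneg fun a _ => mul_nonneg (jointProb_nonneg hπ s a) (g.P_nonneg s a t)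

lemma Pmat_sum (g : SG n S A) {π : Profile n S A} (hπ : IsProfile π) (s : Fin S) :
    ∑ t, g.Pmat π s t = 1 := by
  unfold Pmat
  rw [Finset.sum_comm]
  simp_rw [← Finset.mul_sum, g.P_sum_one, mul_one]
  exact jointProb_sum hπ s

lemma rvec_nonneg (g : SG n S A) {π : Profile n S A} (hπ : IsProfile π) (i : Fin n) (s : Fin S) :
    0 ≤ g.rvec π i s :=
  Finset.sum_nonneg fun a _ => mul_nonneg (jointProb_nonneg hπ s a) (g.r_nonneg i s a)

lemma rvec_le (g : SG n S A) {π : Profile n S A} (hπ : IsProfile π) (i : Fin n) (s : Fin S) :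
    g.rvec π i s ≤ g.Rmax := by
  calc g.rvec π i s ≤ ∑ a, jointProb π s a * g.Rmax :=
        Finset.sum_le_sum fun a _ =>
          mul_le_mul_of_nonneg_left (g.r_le_Rmax i s a) (jointProb_nonneg hπ s a)
    _ = g.Rmax := by rw [← Finset.sum_mul, jointProb_sum hπ, one_mul]

/-- The Bellman operator of agent `i` under the profile `π`. -/
noncomputable def bellman (g : SG n S A) (π : Profile n S A) (i : Fin n) (v : Fin S → ℝ)
    (s : Fin S) : ℝ :=
  g.rvec π i s + g.γ * ∑ t, g.Pmat π s t * v t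

/-- `V` is a genuine fixed point: `1 - γ P^π` is injective by the comparison principle, so the
matrix inverse in the definition of `V` is not a junk value. -/
lemma V_eq_bellman (g : SG n S A) {π : Profile n S A} (hπ : IsProfile π) (i : Fin n)
    (s : Fin S) : g.V π i s = g.bellman π i (g.V π i) s := by
  have hmv : ∀ v : Fin S → ℝ, ∀ s, Matrix.mulVec (1 - g.γ • g.Pmat π) v s
      = v s - g.γ * ∑ t, g.Pmat π s t * v t := by
    intro v s
    rw [Matrix.sub_mulVec, Matrix.one_mulVec, Matrix.smul_mulVec]
    rfl
  have hle : ∀ v w : Fin S → ℝ, Matrix.mulVec (1 - g.γ • g.Pmat π) v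
      = Matrix.mulVec (1 - g.γ • g.Pmat π) w → ∀ s, v s ≤ w s := by
    intro v w h s
    have := le_of_bellman_le (M := g.Pmat π) (c := 0) (x := fun s => v s - w s)
      (g.Pmat_nonneg hπ) (g.Pmat_sum hπ) g.γ_nonneg g.γ_lt_one (fun s => by
        have h1 := congrFun h s
        rw [hmv, hmv] at h1
        simp only [mul_sub, Finset.sum_sub_distrib]
        linarith) s
    simp only [zero_div] at this
    linarith
  have hunit : IsUnit (1 - g.γ • g.Pmat π) :=
    Matrix.mulVec_injective_iff_isUnit.1 fun v w h =>
      funext fun s => le_antisymm (hle v w h s) (hle w v h.symm s)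
  have h : Matrix.mulVec (1 - g.γ • g.Pmat π) (g.V π i) = g.rvec π i := by
    unfold V
    rw [Matrix.mulVec_mulVec, Matrix.mul_nonsing_inv _ ((Matrix.isUnit_iff_isUnit_det _).1 hunit),
      Matrix.one_mulVec]
  have hs := congrFun h s
  rw [hmv] at hs
  unfold bellman
  linarith

/-- Comparison principle for value differences: if the Bellman operator of `ρ` raises `v` by at most
`c`, then the value of `ρ` exceeds `v` by at most `c / (1 - γ)`. -/
lemma V_sub_le (g : SG n S A) {ρ : Profile n S A} (hρ : IsProfile ρ) (i : Fin n)
    (v : Fin S → ℝ) (c : ℝ) (h : ∀ s, g.bellman ρ i v s ≤ v s + c) (s : Fin S) :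
    g.V ρ i s - v s ≤ c / (1 - g.γ) := by
  refine le_of_bellman_le (M := g.Pmat ρ) (x := fun s => g.V ρ i s - v s)
    (g.Pmat_nonneg hρ) (g.Pmat_sum hρ) g.γ_nonneg g.γ_lt_one (fun s => ?_) s
  have h1 := g.V_eq_bellman hρ i s
  have h2 := h s
  unfold bellman at h1 h2
  simp only [mul_sub, Finset.sum_sub_distrib]
  linarith

/-- If the Bellman operator of `ρ` does not lower `v`, then the value of `ρ` is at least `v`. -/
lemma le_V (g : SG n S A) {ρ : Profile n S A} (hρ : IsProfile ρ) (i : Fin n)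
    (v : Fin S → ℝ) (h : ∀ s, v s ≤ g.bellman ρ i v s) (s : Fin S) : v s ≤ g.V ρ i s := by
  have := le_of_bellman_le (M := g.Pmat ρ) (x := fun s => v s - g.V ρ i s) (c := 0)
    (g.Pmat_nonneg hρ) (g.Pmat_sum hρ) g.γ_nonneg g.γ_lt_one (fun s => by
      have h1 := g.V_eq_bellman hρ i s
      have h2 := h s
      unfold bellman at h1 h2
      simp only [mul_sub, Finset.sum_sub_distrib]
      linarith) s
  simp only [zero_div] at this
  linarith

lemma V_nonneg (g : SG n S A) {π : Profile n S A} (hπ : IsProfile π) (i : Fin n) (s : Fin S) :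
    0 ≤ g.V π i s :=
  g.le_V hπ i (fun _ => 0) (fun s => by simpa [bellman] using g.rvec_nonneg hπ i s) s

lemma V_le (g : SG n S A) {π : Profile n S A} (hπ : IsProfile π) (i : Fin n) (s : Fin S) :
    g.V π i s ≤ g.Rmax / (1 - g.γ) := by
  simpa using g.V_sub_le hπ i (fun _ => 0) g.Rmax
    (fun s => by simpa [bellman] using g.rvec_le hπ i s) s

/-! ### Unilateral deviations -/

lemma isProfile_update {π : Profile n S A} (hπ : IsProfile π) (i : Fin n)
    (σ : Fin S → Fin (A i) → ℝ) (hσ : (∀ t b, 0 ≤ σ t b) ∧ ∀ t, ∑ b, σ t b = 1) :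
    IsProfile (Function.update π i σ) := by
  constructor
  · intro j s a
    rcases eq_or_ne j i with rfl | h
    · simpa using hσ.1 s a
    · simpa [h] using hπ.1 j s a
  · intro j s
    rcases eq_or_ne j i with rfl | h
    · simpa using hσ.2 s
    · simpa [h] using hπ.2 j s

lemma isProfile_dev {π : Profile n S A} (hπ : IsProfile π) (i : Fin n) (s : Fin S)
    (b : Fin (A i)) : IsProfile (devProfile π i s b) := by
  refine isProfile_update hπ i _ ⟨fun t c => ?_, fun t => ?_⟩
  · have := hπ.1 i t c
    split_ifs <;> simp [this]
  · by_cases h : t = s <;> simp [h, hπ.2 i]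

lemma jointProb_update (π : Profile n S A) (i : Fin n) (σ : Fin S → Fin (A i) → ℝ) (s : Fin S)
    (a : ∀ i, Fin (A i)) :
    jointProb (Function.update π i σ) s a
      = σ s (a i) * ∏ j ∈ Finset.univ.erase i, π j s (a j) := by
  unfold jointProb
  rw [← Finset.mul_prod_erase _ _ (Finset.mem_univ i), Function.update_self]
  congr 1
  refine Finset.prod_congr rfl fun j hj => ?_
  rw [Function.update_of_ne (Finset.ne_of_mem_erase hj)]

/-- Agent `i`'s randomization is a mixture of its pure deviations. -/
lemma jointProb_update_eq_sum (π : Profile n S A) (i : Fin n) (σ : Fin S → Fin (A i) → ℝ)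
    (s : Fin S) (a : ∀ i, Fin (A i)) :
    jointProb (Function.update π i σ) s a
      = ∑ b, σ s b * jointProb (devProfile π i s b) s a := by
  unfold devProfile
  simp_rw [jointProb_update]
  simp

lemma bellman_eq (g : SG n S A) (π : Profile n S A) (i : Fin n) (v : Fin S → ℝ) (s : Fin S) :
    g.bellman π i v s
      = ∑ a, jointProb π s a * (g.r i s a + g.γ * ∑ t, g.P s a t * v t) := by
  unfold bellman rvec Pmat
  simp_rw [mul_add, Finset.sum_add_distrib, Finset.sum_mul]
  rw [Finset.sum_comm, Finset.mul_sum]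
  congr 1
  refine Finset.sum_congr rfl fun a _ => ?_
  simp_rw [Finset.mul_sum]
  exact Finset.sum_congr rfl fun t _ => by ring

lemma bellman_update (g : SG n S A) (π : Profile n S A) (i : Fin n) (σ : Fin S → Fin (A i) → ℝ)
    (v : Fin S → ℝ) (s : Fin S) :
    g.bellman (Function.update π i σ) i v s
      = ∑ b, σ s b * g.bellman (devProfile π i s b) i v s := by
  simp_rw [bellman_eq, jointProb_update_eq_sum, Finset.sum_mul, Finset.mul_sum (s := univ)
    (f := fun a => jointProb (devProfile π i s _) s a * _)]
  rw [Finset.sum_comm]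
  simp_rw [mul_assoc]

lemma bellman_dev_of_ne (g : SG n S A) (π : Profile n S A) (i : Fin n) (v : Fin S → ℝ)
    {s t : Fin S} (h : t ≠ s) (b : Fin (A i)) :
    g.bellman (devProfile π i s b) i v t = g.bellman π i v t := by
  conv_rhs => rw [← Function.update_eq_self i π]
  unfold devProfile
  simp_rw [bellman_eq, jointProb_update]
  simp [h]

/-! ### Advantages and the gains `D` -/

/-- The advantage of action `b` for agent `i` at state `s`: the gain from playing `b` for one step
and following `π` from then on. -/
noncomputable def adv (g : SG n S A) (π : Profile n S A) (i : Fin n) (s : Fin S)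
    (b : Fin (A i)) : ℝ :=
  g.bellman (devProfile π i s b) i (g.V π i) s - g.V π i s

lemma sum_adv (g : SG n S A) {π : Profile n S A} (hπ : IsProfile π) (i : Fin n) (s : Fin S) :
    ∑ b, π i s b * g.adv π i s b = 0 := by
  unfold adv
  have h := g.bellman_update π i (π i) (g.V π i) s
  rw [Function.update_eq_self, ← g.V_eq_bellman hπ] at h
  simp_rw [mul_sub, Finset.sum_sub_distrib, ← Finset.sum_mul, hπ.2 i s]
  linarith

lemma neg_le_adv (g : SG n S A) {π : Profile n S A} (hπ : IsProfile π) (i : Fin n) (s : Fin S)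
    (b : Fin (A i)) : -(g.Rmax / (1 - g.γ)) ≤ g.adv π i s b := by
  have hd := isProfile_dev hπ i s b
  have h : 0 ≤ g.bellman (devProfile π i s b) i (g.V π i) s :=
    add_nonneg (g.rvec_nonneg hd i s) (mul_nonneg g.γ_nonneg
      (Finset.sum_nonneg fun t _ => mul_nonneg (g.Pmat_nonneg hd s t) (g.V_nonneg hπ i t)))
  have := g.V_le hπ i s
  unfold adv
  linarith

lemma D_nonneg (g : SG n S A) (π : Profile n S A) (i : Fin n) (s : Fin S) (b : Fin (A i)) :
    0 ≤ g.D π i s b := le_max_left _ _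

lemma D_le (g : SG n S A) {π : Profile n S A} (hπ : IsProfile π) (hR : 0 ≤ g.Rmax) (i : Fin n)
    (s : Fin S) (b : Fin (A i)) : g.D π i s b ≤ g.Rmax / (1 - g.γ) := by
  have h1 := g.V_le (isProfile_dev hπ i s b) i s
  have h2 := g.V_nonneg hπ i s
  have h3 := g.γ_lt_one
  exact max_le (div_nonneg hR (by linarith)) (by unfold Vdev; linarith)

lemma bellman_dev_le (g : SG n S A) {π : Profile n S A} (hπ : IsProfile π) (i : Fin n)
    (s : Fin S) (b : Fin (A i)) {c : ℝ} (hc : 0 ≤ c) (h : g.adv π i s b ≤ c) (t : Fin S) :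
    g.bellman (devProfile π i s b) i (g.V π i) t ≤ g.V π i t + c := by
  rcases eq_or_ne t s with rfl | ht
  · unfold adv at h
    linarith
  · rw [g.bellman_dev_of_ne π i _ ht, ← g.V_eq_bellman hπ]
    linarith

lemma D_eq_zero (g : SG n S A) {π : Profile n S A} (hπ : IsProfile π) (i : Fin n) (s : Fin S)
    (b : Fin (A i)) (h : g.adv π i s b ≤ 0) : g.D π i s b = 0 := by
  have := g.V_sub_le (isProfile_dev hπ i s b) i (g.V π i) 0 (g.bellman_dev_le hπ i s b le_rfl h) s
  rw [zero_div] at this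
  exact max_eq_left this

lemma D_le_adv_div (g : SG n S A) {π : Profile n S A} (hπ : IsProfile π) (i : Fin n) (s : Fin S)
    (b : Fin (A i)) (h : 0 ≤ g.adv π i s b) :
    g.D π i s b ≤ g.adv π i s b / (1 - g.γ) := by
  have h3 := g.γ_lt_one
  exact max_le (div_nonneg h (by linarith))
    (g.V_sub_le (isProfile_dev hπ i s b) i (g.V π i) _ (g.bellman_dev_le hπ i s b h le_rfl) s)

/-- When the advantage is nonnegative, repeating the deviation at every return to `s` can only
increase the gain of the single deviation. -/
lemma adv_le_D (g : SG n S A) {π : Profile n S A} (hπ : IsProfile π) (i : Fin n) (s : Fin S)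
    (b : Fin (A i)) : g.adv π i s b ≤ g.D π i s b := by
  rcases le_total (g.adv π i s b) 0 with h | h
  · exact h.trans (g.D_nonneg π i s b)
  have hd := isProfile_dev hπ i s b
  have hV : ∀ t, g.V π i t ≤ g.V (devProfile π i s b) i t := by
    refine g.le_V hd i _ fun t => ?_
    rcases eq_or_ne t s with rfl | ht
    · unfold adv at h
      linarith
    · rw [g.bellman_dev_of_ne π i _ ht, ← g.V_eq_bellman hπ]
  refine le_trans ?_ (le_max_right _ _)
  unfold Vdev adv
  rw [g.V_eq_bellman hd i s]
  have h2 : ∑ t, g.Pmat (devProfile π i s b) s t * g.V π i t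
      ≤ ∑ t, g.Pmat (devProfile π i s b) s t * g.V (devProfile π i s b) i t :=
    Finset.sum_le_sum fun t _ => mul_le_mul_of_nonneg_left (hV t) (g.Pmat_nonneg hd s t)
  have h3 := mul_le_mul_of_nonneg_left h2 g.γ_nonneg
  unfold bellman
  linarith

/-! ### Approximate fixed points have small gains -/

/-- The quantitative heart of the argument, for one agent at one state: `p` is the mixed action, `w`
the advantages, `d` the gains used by Nash's map, `u = 1 - γ`.  Summing a lower bound for
`(∑ d) * p b * w b` over `b` and using `∑ p b * w b = 0` together with Cauchy–Schwarz gives a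
quadratic inequality for `∑ d`. -/
lemma sum_gain_le {ι : Type*} [Fintype ι] {p w d : ι → ℝ} {u R N L : ℝ}
    (hu : 0 < u) (hu1 : u ≤ 1) (hR : 1 ≤ R) (hN : 1 ≤ N) (hL : 1 ≤ L)
    (hcard : (Fintype.card ι : ℝ) ≤ N)
    (hp : ∀ b, 0 ≤ p b) (hw : ∑ b, p b * w b = 0) (hwR : ∀ b, -(R / u) ≤ w b)
    (hd : ∀ b, 0 ≤ d b) (hdR : ∀ b, d b ≤ R / u)
    (hd0 : ∀ b, w b ≤ 0 → d b = 0) (hdw : ∀ b, 0 ≤ w b → d b ≤ w b / u)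
    (hfix : ∀ b, |(p b + d b) / (1 + ∑ c, d c) - p b| ≤ u ^ 5 / (32 * N ^ 3 * R ^ 3 * L ^ 2)) :
    ∑ b, d b ≤ u / (2 * L) := by
  set T := ∑ b, d b with hT
  have hT0 : 0 ≤ T := Finset.sum_nonneg fun b _ => hd b
  have hRu : 0 ≤ R / u := by positivity
  have hT1 : T ≤ N * (R / u) := by
    calc T ≤ ∑ _b : ι, R / u := Finset.sum_le_sum fun b _ => hdR b
      _ = Fintype.card ι * (R / u) := by simp
      _ ≤ N * (R / u) := mul_le_mul_of_nonneg_right hcard hRu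
  have hNR : 1 ≤ N * (R / u) := by
    have : 1 ≤ R / u := by rw [le_div_iff₀ hu]; linarith
    nlinarith
  -- The error allowed in `d b ≈ p b * T` after clearing the denominator `1 + T ≤ 2 N R / u`.
  obtain ⟨e, he⟩ : ∃ e : ℝ, e = u ^ 4 / (16 * N ^ 2 * R ^ 2 * L ^ 2) := ⟨_, rfl⟩
  have he0 : 0 ≤ e := by rw [he]; positivity
  have habs : ∀ b, |d b - p b * T| ≤ e := by
    intro b
    have h1 : (p b + d b) / (1 + T) - p b = (d b - p b * T) / (1 + T) := by
      field_simp
      ring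
    have h2 := hfix b
    rw [h1, abs_div, abs_of_pos (by linarith : 0 < 1 + T), div_le_iff₀ (by linarith)] at h2
    refine h2.trans ?_
    calc u ^ 5 / (32 * N ^ 3 * R ^ 3 * L ^ 2) * (1 + T)
        ≤ u ^ 5 / (32 * N ^ 3 * R ^ 3 * L ^ 2) * (2 * (N * (R / u))) :=
          mul_le_mul_of_nonneg_left (by linarith) (by positivity)
      _ = e := by
          rw [he]
          field_simp
          norm_num
  have hterm : ∀ b, u * (d b ^ 2 - e * d b) - (R / u) * e ≤ T * (p b * w b) := by
    intro b
    have hb := abs_le.1 (habs b)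
    have hpT : 0 ≤ p b * T := mul_nonneg (hp b) hT0
    rcases le_total (w b) 0 with h | h
    · have h0 := hd0 b h
      rw [h0] at hb ⊢
      have h1 := mul_le_mul_of_nonneg_left (hwR b) hpT
      have h2 : p b * T * (R / u) ≤ e * (R / u) :=
        mul_le_mul_of_nonneg_right (by linarith [hb.1]) hRu
      nlinarith
    · have h1 : d b * u ≤ w b := (le_div_iff₀ hu).1 (hdw b h)
      have h2 := mul_le_mul_of_nonneg_left h1 hpT
      have h3 : (d b - e) * (d b * u) ≤ p b * T * (d b * u) :=
        mul_le_mul_of_nonneg_right (by linarith [hb.2]) (mul_nonneg (hd b) hu.le)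
      have h4 : 0 ≤ (R / u) * e := mul_nonneg hRu he0
      nlinarith
  have hsum := Finset.sum_le_sum fun b (_ : b ∈ Finset.univ) => hterm b
  rw [← Finset.mul_sum, hw, mul_zero, Finset.sum_sub_distrib, ← Finset.mul_sum,
    Finset.sum_sub_distrib, ← Finset.mul_sum, ← hT, Finset.sum_const, Finset.card_univ,
    nsmul_eq_mul] at hsum
  have hcs : T ^ 2 ≤ N * ∑ b, d b ^ 2 := by
    refine (sq_sum_le_card_mul_sum_sq (s := Finset.univ) (f := d)).trans ?_
    rw [Finset.card_univ]
    exact mul_le_mul_of_nonneg_right hcard (Finset.sum_nonneg fun b _ => sq_nonneg _)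
  have hquad : u * T ^ 2 ≤ u * (N * e) * T + N ^ 2 * (R / u * e) := by
    have h1 : (Fintype.card ι : ℝ) * (R / u * e) ≤ N * (R / u * e) :=
      mul_le_mul_of_nonneg_right hcard (mul_nonneg hRu he0)
    have h2 := mul_le_mul_of_nonneg_left hcs hu.le
    have h3 : N * (u * (∑ b, d b ^ 2 - e * T)) ≤ N * (N * (R / u * e)) :=
      mul_le_mul_of_nonneg_left (by linarith) (by linarith)
    nlinarith
  obtain ⟨x, hx⟩ : ∃ x : ℝ, x = u / L := ⟨_, rfl⟩
  have hx0 : 0 < x := by rw [hx]; positivity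
  have hA1 : N * e ≤ x / 16 := by
    have h1 : N * e = x / 16 * (u ^ 3 / (N * R ^ 2 * L)) := by
      rw [he, hx]
      field_simp
    rw [h1]
    refine mul_le_of_le_one_right (by positivity) ((div_le_one (by positivity)).2 ?_)
    exact (pow_le_one₀ hu.le hu1).trans
      (one_le_mul_of_one_le_of_one_le
        (one_le_mul_of_one_le_of_one_le hN (one_le_pow₀ hR)) hL)
  have hA2 : N ^ 2 * (R / u * e) ≤ u * (x ^ 2 / 16) := by
    have h1 : N ^ 2 * (R / u * e) = u * (x ^ 2 / 16) * (1 / R) := by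
      rw [he, hx]
      field_simp
    rw [h1]
    exact mul_le_of_le_one_right (by positivity) ((div_le_one (by positivity)).2 hR)
  have hfin : T ^ 2 ≤ x / 16 * T + x ^ 2 / 16 := by
    have h1 := mul_le_mul_of_nonneg_left (mul_le_mul_of_nonneg_right hA1 hT0) hu.le
    refine le_of_mul_le_mul_left ?_ hu
    nlinarith
  have hgoal : u / (2 * L) = x / 2 := by
    rw [hx]
    field_simp
  rw [hgoal]
  by_contra! hlt
  nlinarith

end SG

open SG in
/-- with `L ≥ 1`, `R_max ≥ 1`, `A_max ≥ 1`, any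
`(1−γ)⁵/(32A_max³R_max³L²)`-approximate fixed point of `f` is a `1/L`-approximate MPE. -/
theorem isApproxMPE_of_choice_of_d {n S : ℕ} {A : Fin n → ℕ} (g : SG n S A)
    (L : ℝ) (hL : 1 ≤ L) (hR : 1 ≤ g.Rmax) (hA : 1 ≤ (Amax A : ℝ))
    (π : Profile n S A) (hπ : IsProfile π)
    (hfix : ∀ i s a, |g.f π i s a - π i s a| ≤
      (1 - g.γ) ^ 5 / (32 * (Amax A : ℝ) ^ 3 * g.Rmax ^ 3 * L ^ 2)) :
    g.IsApproxMPE π (1 / L) := by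
  intro s i σ hσ
  have hγ0 := g.γ_nonneg
  have hγ := g.γ_lt_one
  have hD : ∀ t, ∑ b, g.D π i t b ≤ (1 - g.γ) / (2 * L) := by
    intro t
    refine sum_gain_le (p := π i t) (w := g.adv π i t) (R := g.Rmax) (N := (Amax A : ℝ))
      (by linarith) (by linarith) hR hA hL ?_ (hπ.1 i t) (g.sum_adv hπ i t)
      (g.neg_le_adv hπ i t) (g.D_nonneg π i t) (g.D_le hπ (by linarith) i t)
      (g.D_eq_zero hπ i t) (g.D_le_adv_div hπ i t) (hfix i t)
    rw [Fintype.card_fin]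
    exact_mod_cast Finset.le_sup (f := A) (Finset.mem_univ i)
  have hB : ∀ t, g.bellman (Function.update π i σ) i (g.V π i) t
      ≤ g.V π i t + (1 - g.γ) / (2 * L) := by
    intro t
    have hb : ∀ b, g.bellman (devProfile π i t b) i (g.V π i) t
        ≤ g.V π i t + (1 - g.γ) / (2 * L) := by
      intro b
      have h1 := g.adv_le_D hπ i t b
      have h2 := Finset.single_le_sum (fun c _ => g.D_nonneg π i t c) (Finset.mem_univ b)
      have h3 := hD t
      unfold adv at h1
      linarith
    rw [g.bellman_update]
    calc _ ≤ ∑ b, σ t b * (g.V π i t + (1 - g.γ) / (2 * L)) :=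
          Finset.sum_le_sum fun b _ => mul_le_mul_of_nonneg_left (hb b) (hσ.1 t b)
      _ = _ := by rw [← Finset.sum_mul, hσ.2 t, one_mul]
  have h := g.V_sub_le (isProfile_update hπ i σ hσ) i (g.V π i) _ hB s
  have h1 : (1 - g.γ) / (2 * L) / (1 - g.γ) = 1 / L / 2 := by
    have : 1 - g.γ ≠ 0 := by linarith
    field_simp
  have h2 : 0 < 1 / L := by positivity
  rw [h1] at h
  linarith
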